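/- Let p be a prime and let S ⊆ F_p^2 be a set of seven distinct points no five of which are collinear. Then S imposes independent conditions on cubic curves; that is, the F_p-vector space of polynomials in F_p[X,Y] of total degree at most 3 vanishing at every point of S has dimension exactly 3 (codimension 7 in the 10-dimensional space of all polynomials of total degree at most 3). -/

import Mathlib

/-!
For each `q ∈ S` there is a product of three lines that vanishes on the six other points but not
at `q`. Sort these six points `r₀, …, r₅` by the slope of the line joining them to `q`, and pair
`rᵢ` with `rᵢ₊₃`. If `rᵢ` and `rᵢ₊₃` had the same slope, so would all of `rᵢ, …, rᵢ₊₃`, and these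
four points together with `q` would be five collinear points. Hence the line through `rᵢ` and
`rᵢ₊₃` avoids `q`, and the product of the three lines is the required cubic.

Consequently evaluation at `S` maps the 10-dimensional space of cubics onto `S → ZMod p`, and
rank-nullity leaves a kernel of dimension `10 - 7 = 3`.
-/

open scoped Classical

noncomputable section

def zeroSet {p : ℕ} (f : MvPolynomial (Fin 2) (ZMod p)) : Set (Fin 2 → ZMod p) :=
  {x | MvPolynomial.eval x f = 0}

/-- The space of polynomials of total degree at most 3 vanishing at every point of `S`. -/
def vanishingCubics (p : ℕ) (S : Finset (Fin 2 → ZMod p)) :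
    Submodule (ZMod p) (MvPolynomial (Fin 2) (ZMod p)) :=
  MvPolynomial.restrictTotalDegree (Fin 2) (ZMod p) 3 ⊓
    ⨅ q ∈ S, LinearMap.ker (MvPolynomial.aeval (R := ZMod p) q).toLinearMap

/-- A finite set of points is collinear if all its points lie on the zero set of a
polynomial of total degree 1. -/
def CollinearPts {p : ℕ} (T : Finset (Fin 2 → ZMod p)) : Prop :=
  ∃ f : MvPolynomial (Fin 2) (ZMod p), f.totalDegree = 1 ∧ ∀ q ∈ T, q ∈ zeroSet f

open MvPolynomial

/-- The slope of the line through `q` and `r`, encoded as a natural number so that points can be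
sorted by it; the value `p` stands for the vertical direction. -/
def slopeCode {p : ℕ} [Fact p.Prime] (q r : Fin 2 → ZMod p) : ℕ :=
  if r 0 = q 0 then p else ((r 1 - q 1) / (r 0 - q 0)).val

/-- The affine form cutting out the line through `r` and `s` (zero if `r = s`). -/
def lineThrough {p : ℕ} (r s : Fin 2 → ZMod p) : MvPolynomial (Fin 2) (ZMod p) :=
  C (s 1 - r 1) * (X 0 - C (r 0)) - C (s 0 - r 0) * (X 1 - C (r 1))

lemma eval_lineThrough {p : ℕ} (r s x : Fin 2 → ZMod p) :
    eval x (lineThrough r s) = (s 1 - r 1) * (x 0 - r 0) - (s 0 - r 0) * (x 1 - r 1) := by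
  simp [lineThrough]

lemma totalDegree_lineThrough_le {p : ℕ} [Fact p.Prime] (r s : Fin 2 → ZMod p) :
    (lineThrough r s).totalDegree ≤ 1 := by
  have h : ∀ (a b : ZMod p) (i : Fin 2), (C a * (X i - C b)).totalDegree ≤ 1 := fun a b i => by
    refine (totalDegree_mul _ _).trans ?_
    rw [totalDegree_C, zero_add]
    refine (totalDegree_sub _ _).trans ?_
    simp [totalDegree_X]
  exact (totalDegree_sub _ _).trans (max_le (h _ _ _) (h _ _ _))

/-- A line joining two points seen from `q` in different directions avoids `q`. -/
lemma eval_lineThrough_ne_zero {p : ℕ} [Fact p.Prime] {q r s : Fin 2 → ZMod p}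
    (hr : r ≠ q) (hs : s ≠ q) (h : slopeCode q r ≠ slopeCode q s) :
    eval q (lineThrough r s) ≠ 0 := by
  rw [eval_lineThrough]
  intro h0
  have ext_of : ∀ t : Fin 2 → ZMod p, t ≠ q → t 0 = q 0 → t 1 - q 1 ≠ 0 := by
    intro t ht h1 h2
    apply ht
    ext i
    fin_cases i
    · exact h1
    · exact sub_eq_zero.mp h2
  have key : (r 0 - q 0) * (s 1 - q 1) = (r 1 - q 1) * (s 0 - q 0) := by linear_combination -h0
  apply h
  unfold slopeCode
  by_cases h1 : r 0 = q 0
  · have h2 : s 0 = q 0 := by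
      have := ext_of r hr h1
      rw [h1, sub_self, zero_mul, eq_comm, mul_eq_zero] at key
      exact sub_eq_zero.mp (key.resolve_left this)
    simp [h1, h2]
  · have h2 : s 0 ≠ q 0 := by
      intro h2
      have := ext_of s hs h2
      rw [h2, sub_self, mul_zero, mul_eq_zero] at key
      exact h1 (sub_eq_zero.mp (key.resolve_right this))
    rw [if_neg h1, if_neg h2]
    have h1' := sub_ne_zero.mpr h1
    have h2' := sub_ne_zero.mpr h2
    congr 1
    rw [div_eq_div_iff h1' h2']
    linear_combination -key

/-- A nonconstant affine form has total degree exactly 1. -/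
lemma totalDegree_eq_one_of_eval_ne {p : ℕ} [Fact p.Prime] {f : MvPolynomial (Fin 2) (ZMod p)}
    (hf : f.totalDegree ≤ 1) {x y : Fin 2 → ZMod p} (h : eval x f ≠ eval y f) :
    f.totalDegree = 1 := by
  refine le_antisymm hf (Nat.one_le_iff_ne_zero.mpr fun h0 => h ?_)
  rw [totalDegree_eq_zero_iff_eq_C.mp h0, eval_C, eval_C]

/-- Points with the same slope from `q` lie, together with `q`, on one line. -/
lemma collinearPts_of_slopeCode_eq {p : ℕ} [Fact p.Prime] {q : Fin 2 → ZMod p}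
    {T : Finset (Fin 2 → ZMod p)} (n : ℕ) (h : ∀ r ∈ T, slopeCode q r = n) :
    CollinearPts (insert q T) := by
  by_cases hn : n = p
  · refine ⟨lineThrough q (q + ![0, 1]), totalDegree_eq_one_of_eval_ne
      (totalDegree_lineThrough_le _ _) (x := q) (y := q + ![1, 0]) ?_, fun r hr => ?_⟩
    · simp [eval_lineThrough, Matrix.vecHead, Matrix.vecTail]
    · show eval _ _ = 0
      rcases Finset.mem_insert.mp hr with rfl | hr
      · simp [eval_lineThrough, Matrix.vecHead, Matrix.vecTail]
      · have h1 := h r hr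
        by_cases h2 : r 0 = q 0
        · simp [eval_lineThrough, Matrix.vecHead, h2]
        · rw [slopeCode, if_neg h2, hn] at h1
          exact absurd h1 (ZMod.val_lt _).ne
  · refine ⟨lineThrough q (q + ![1, (n : ZMod p)]), totalDegree_eq_one_of_eval_ne
      (totalDegree_lineThrough_le _ _) (x := q) (y := q + ![0, 1]) ?_, fun r hr => ?_⟩
    · simp [eval_lineThrough, Matrix.vecHead, Matrix.vecTail]
    · show eval _ _ = 0
      rcases Finset.mem_insert.mp hr with rfl | hr
      · simp [eval_lineThrough, Matrix.vecHead, Matrix.vecTail]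
      · have h1 := h r hr
        by_cases h2 : r 0 = q 0
        · rw [slopeCode, if_pos h2] at h1
          exact absurd h1.symm hn
        · rw [slopeCode, if_neg h2] at h1
          rw [← h1]
          have h2' := sub_ne_zero.mpr h2
          simp only [eval_lineThrough, ZMod.natCast_val, ZMod.cast_id', id, Pi.add_apply,
            Matrix.cons_val_zero, Matrix.cons_val_one]
          field_simp
          ring

/-- The separating cubic: a product of three lines through the points of `S` other than `q`. -/
lemma exists_cubic_separating {p : ℕ} [Fact p.Prime] {S : Finset (Fin 2 → ZMod p)}
    (hS : S.card = 7) (hcol : ∀ T ⊆ S, T.card = 5 → ¬ CollinearPts T)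
    {q : Fin 2 → ZMod p} (hq : q ∈ S) :
    ∃ f : MvPolynomial (Fin 2) (ZMod p), f.totalDegree ≤ 3 ∧ eval q f ≠ 0 ∧
      ∀ r ∈ S, r ≠ q → eval r f = 0 := by
  have hcard : (S.erase q).card = 6 := by rw [Finset.card_erase_of_mem hq, hS]
  let e := ((S.erase q).equivFinOfCardEq hcard).symm
  let c : Fin 6 → ℕ := fun i => slopeCode q (e i)
  let r : Fin 6 → (Fin 2 → ZMod p) := fun i => e (Tuple.sort c i)
  have hmono : Monotone fun i => slopeCode q (r i) := Tuple.monotone_sort c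
  have hinj : Function.Injective r :=
    Subtype.val_injective.comp (e.injective.comp (Tuple.sort c).injective)
  have hmem : ∀ i, r i ∈ S.erase q := fun i => (e (Tuple.sort c i)).2
  have hne : ∀ i, r i ≠ q := fun i => Finset.ne_of_mem_erase (hmem i)
  have hsurj : ∀ x ∈ S, x ≠ q → ∃ i, r i = x := fun x hx hxq =>
    ⟨(Tuple.sort c).symm (e.symm ⟨x, Finset.mem_erase.mpr ⟨hxq, hx⟩⟩), by simp [r]⟩
  have hslope : ∀ i j : Fin 6, (i : ℕ) + 3 = j → slopeCode q (r i) ≠ slopeCode q (r j) := by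
    intro i j hij heq
    refine hcol (insert q ((Finset.Icc i j).image r)) ?_ ?_
      (collinearPts_of_slopeCode_eq (slopeCode q (r i)) ?_)
    · intro x hx
      rcases Finset.mem_insert.mp hx with rfl | hx
      · exact hq
      · obtain ⟨k, -, rfl⟩ := Finset.mem_image.mp hx
        exact Finset.mem_of_mem_erase (hmem k)
    · rw [Finset.card_insert_of_notMem, Finset.card_image_of_injective _ hinj, Fin.card_Icc]
      · omega
      · intro hx
        obtain ⟨k, -, hk⟩ := Finset.mem_image.mp hx
        exact hne k hk
    · intro x hx
      obtain ⟨k, hk, rfl⟩ := Finset.mem_image.mp hx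
      obtain ⟨h1, h2⟩ := Finset.mem_Icc.mp hk
      exact le_antisymm ((hmono h2).trans heq.ge) (hmono h1)
  refine ⟨lineThrough (r 0) (r 3) * lineThrough (r 1) (r 4) * lineThrough (r 2) (r 5), ?_, ?_, ?_⟩
  · have h1 := totalDegree_lineThrough_le (r 0) (r 3)
    have h2 := totalDegree_lineThrough_le (r 1) (r 4)
    have h3 := totalDegree_lineThrough_le (r 2) (r 5)
    have h4 := totalDegree_mul (lineThrough (r 0) (r 3)) (lineThrough (r 1) (r 4))
    have h5 := totalDegree_mul (lineThrough (r 0) (r 3) * lineThrough (r 1) (r 4))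
      (lineThrough (r 2) (r 5))
    omega
  · rw [map_mul, map_mul]
    exact mul_ne_zero (mul_ne_zero
      (eval_lineThrough_ne_zero (hne _) (hne _) (hslope 0 3 rfl))
      (eval_lineThrough_ne_zero (hne _) (hne _) (hslope 1 4 rfl)))
      (eval_lineThrough_ne_zero (hne _) (hne _) (hslope 2 5 rfl))
  · intro x hx hxq
    obtain ⟨i, rfl⟩ := hsurj x hx hxq
    fin_cases i <;> simp only [map_mul, eval_lineThrough] <;> simp <;> ring_nf <;> simp

/-- Exponent vectors of total degree at most 3, as pairs of small exponents. -/
def exponentEquiv : {n : Fin 2 →₀ ℕ | (n.sum fun _ e => e) ≤ 3} ≃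
    {x : Fin 4 × Fin 4 // (x.1 : ℕ) + x.2 ≤ 3} where
  toFun n := by
    have h : n.1 0 + n.1 1 ≤ 3 := by
      have := n.2
      rwa [Set.mem_ofPred_eq, Finsupp.sum_fintype _ _ (fun _ => rfl), Fin.sum_univ_two] at this
    exact ⟨(⟨n.1 0, by omega⟩, ⟨n.1 1, by omega⟩), h⟩
  invFun x := ⟨Finsupp.equivFunOnFinite.symm ![x.1.1, x.1.2], by
    rw [Set.mem_ofPred_eq, Finsupp.sum_fintype _ _ (fun _ => rfl), Fin.sum_univ_two]
    exact x.2⟩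
  left_inv n := by
    ext i
    fin_cases i <;> rfl
  right_inv x := rfl

lemma finrank_cubics (p : ℕ) [Fact p.Prime] :
    Module.finrank (ZMod p) (restrictTotalDegree (Fin 2) (ZMod p) 3) = 10 := by
  have h := Module.finrank_eq_nat_card_basis
    (basisRestrictSupport (ZMod p) {n : Fin 2 →₀ ℕ | (n.sum fun _ e => e) ≤ 3})
  refine h.trans ((Nat.card_congr exponentEquiv).trans ?_)
  rw [Nat.card_eq_fintype_card, Fintype.card_subtype]
  decide

theorem seven_points_independent_conditions
    (p : ℕ) [Fact p.Prime] (S : Finset (Fin 2 → ZMod p)) (hS : S.card = 7)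
    (hcol : ∀ T ⊆ S, T.card = 5 → ¬ CollinearPts T) :
    Module.finrank (ZMod p) (vanishingCubics p S) = 3 := by
  let V := restrictTotalDegree (Fin 2) (ZMod p) 3
  let E : MvPolynomial (Fin 2) (ZMod p) →ₗ[ZMod p] (S → ZMod p) :=
    LinearMap.pi fun q => (aeval (R := ZMod p) (q : Fin 2 → ZMod p)).toLinearMap
  let φ : V →ₗ[ZMod p] (S → ZMod p) := E.domRestrict V
  have hV : Module.finrank (ZMod p) V = 10 := finrank_cubics p
  have : FiniteDimensional (ZMod p) V := FiniteDimensional.of_finrank_pos (by omega)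
  have hE : ∀ f q, E f q = eval q.1 f := fun f q => by simp [E, aeval_eq_eval]
  have hker : vanishingCubics p S = (LinearMap.ker φ).map V.subtype := by
    ext f
    simp only [vanishingCubics, Submodule.mem_inf, Submodule.mem_iInf, LinearMap.mem_ker,
      Submodule.mem_map]
    constructor
    · rintro ⟨h1, h2⟩
      exact ⟨⟨f, h1⟩, funext fun q => h2 q.1 q.2, rfl⟩
    · rintro ⟨g, hg, rfl⟩
      exact ⟨g.2, fun q hq => congrFun hg ⟨q, hq⟩⟩
  have hsurj : LinearMap.range φ = ⊤ := by
    rw [eq_top_iff, ← (Pi.basisFun (ZMod p) S).span_eq, Submodule.span_le]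
    rintro _ ⟨q, rfl⟩
    obtain ⟨f, hdeg, hfq, hf⟩ := exists_cubic_separating hS hcol q.2
    refine ⟨(eval q.1 f)⁻¹ • ⟨f, (mem_restrictTotalDegree _ _ _).mpr hdeg⟩, funext fun r => ?_⟩
    show E ((eval q.1 f)⁻¹ • f) r = _
    rw [hE, smul_eval, Pi.basisFun_apply]
    by_cases hrq : r = q
    · subst hrq
      simp [hfq]
    · rw [hf r.1 r.2 (fun h => hrq (Subtype.ext h)), mul_zero, Pi.single_eq_of_ne hrq]
  have hrn := φ.finrank_range_add_finrank_ker
  rw [hsurj, finrank_top, Module.finrank_pi, Fintype.card_coe, hS, hV] at hrn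
  rw [hker, Submodule.finrank_map_subtype_eq]
  omega
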